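/- arXiv:math/9907143 — 4 statements merged into one kernel-verified Lean document; each statement's English description precedes it below -/
import Mathlib

section
/- Let n ≥ 1 and let r = (r₁,…,rₙ) be an n-tuple of nonnegative real numbers. Then there exist matrices b₁,…,bₙ ∈ B with b₁⋯bₙ = 1 and tr(bᵢ bᵢ*) = 2·cosh(rᵢ) for every i, if and only if for every i one has rᵢ ≤ r₁ + ⋯ + r̂ᵢ + ⋯ + rₙ (the sum of all the other rⱼ). (This is the statement that the image of the side-length map on closed n-gons in hyperbolic 3-space is the polyhedral cone Dₙ.) -/
open Matrix

/-- `B` is the subgroup of `SL₂(ℂ)` of upper-triangular matrices with positive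
real diagonal entries (and determinant 1). -/
def InB (b : Matrix (Fin 2) (Fin 2) ℂ) : Prop :=
  b.det = 1 ∧ b 1 0 = 0 ∧ (b 0 0).im = 0 ∧ 0 < (b 0 0).re ∧ (b 1 1).im = 0 ∧ 0 < (b 1 1).re

/-!
For `b ∈ B` with `tr (b b*) = 2 cosh ρ`, `ρ ≥ 0`, the number `ρ` is the distance from the base
point to its image under `b`.

Necessity is the triangle inequality: writing the Hermitian matrices `b* b` and `c c*` in Minkowski
coordinates, `tr (bc (bc)*) / 2` is at most `cosh r cosh s + sinh r sinh s = cosh (r + s)` by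
Cauchy–Schwarz in ℝ³ (`minkowski_le`, `Short.mul`). Solving the closing condition for `bᵢ` presents
it as a product of inverses of partial products, whose lengths are bounded by the sums of the other
side lengths.

Sufficiency is proved in the hyperbolic plane, that is, with real matrices. The law of cosines
gives a triangle with prescribed side lengths over any prescribed side (`exists_triangle`).
Induction on `n` then factors any real `c ∈ B` of length `d` into factors of lengths `rᵢ`, provided
that `d, r₁, …, rₙ` satisfy the polygon inequalities (`exists_factors`): the first triangle is cut
off along a diagonal of length `min (r₁ + d) (r₂ + ⋯ + rₙ)`. The claim is the case `c = 1`, `d = 0`.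
-/

/-- The element of `B` with diagonal `a, a⁻¹` and upper right entry `z`. -/
noncomputable def upperB (a : ℝ) (z : ℂ) : Matrix (Fin 2) (Fin 2) ℂ :=
  !![(a : ℂ), z; 0, ((a⁻¹ : ℝ) : ℂ)]

lemma inB_upperB {a : ℝ} (ha : 0 < a) (z : ℂ) : InB (upperB a z) := by
  have h : (a : ℂ) ≠ 0 := by exact_mod_cast ha.ne'
  refine ⟨?_, ?_, ?_, ?_, ?_, ?_⟩ <;> simp [upperB, Matrix.det_fin_two, h, ha]

lemma InB.exists_eq {b : Matrix (Fin 2) (Fin 2) ℂ} (hb : InB b) :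
    ∃ a : ℝ, 0 < a ∧ ∃ z : ℂ, b = upperB a z := by
  obtain ⟨hdet, h10, h00i, h00, h11i, h11⟩ := hb
  have e0 : b 0 0 = ((b 0 0).re : ℂ) := by apply Complex.ext <;> simp [h00i]
  have e1 : b 1 1 = ((b 1 1).re : ℂ) := by apply Complex.ext <;> simp [h11i]
  have hm : (b 0 0).re * (b 1 1).re = 1 := by
    rw [Matrix.det_fin_two, h10, e0, e1] at hdet
    simp only [mul_zero, sub_zero] at hdet
    exact_mod_cast hdet
  have hinv : (b 1 1).re = (b 0 0).re⁻¹ := eq_inv_of_mul_eq_one_right hm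
  refine ⟨(b 0 0).re, h00, b 0 1, ?_⟩
  ext i j
  fin_cases i <;> fin_cases j
  · exact e0
  · rfl
  · exact h10
  · change b 1 1 = (((b 0 0).re⁻¹ : ℝ) : ℂ)
    rw [← hinv]; exact e1

lemma upperB_mul (a c : ℝ) (z w : ℂ) :
    upperB a z * upperB c w = upperB (a * c) (a * w + z * (c⁻¹ : ℝ)) := by
  ext i j
  fin_cases i <;> fin_cases j <;> simp [upperB, Matrix.mul_apply, Fin.sum_univ_two, mul_comm]

lemma upperB_one : upperB 1 0 = 1 := by
  ext i j
  fin_cases i <;> fin_cases j <;> simp [upperB]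

lemma trace_upperB (a : ℝ) (z : ℂ) :
    Matrix.trace (upperB a z * (upperB a z)ᴴ)
      = ((a ^ 2 + a⁻¹ ^ 2 + (z.re ^ 2 + z.im ^ 2) : ℝ) : ℂ) := by
  have h := Complex.mul_conj z
  rw [Complex.normSq_apply] at h
  simp only [upperB, Matrix.trace_fin_two, Matrix.mul_apply, Fin.sum_univ_two,
    Matrix.conjTranspose_apply]
  simp
  rw [h]
  push_cast
  ring

/-! ### The triangle inequality -/

/-- For points `h`, `k` of the unit hyperboloid at distances at most `r`, `s` from the base point,
Cauchy–Schwarz on the spatial parts bounds the pairing by its value when `h` and `k` lie on a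
common ray from the base point. The left side is `cosh` of the distance from `k` to the reflection
of `h` in the base point. -/
lemma minkowski_le {h0 h1 h2 h3 k0 k1 k2 k3 r s : ℝ} (hr : 0 ≤ r) (hs : 0 ≤ s)
    (hh : h0 ^ 2 = 1 + (h1 ^ 2 + h2 ^ 2 + h3 ^ 2)) (hk : k0 ^ 2 = 1 + (k1 ^ 2 + k2 ^ 2 + k3 ^ 2))
    (hh0 : 0 ≤ h0) (hk0 : 0 ≤ k0) (h0r : h0 ≤ Real.cosh r) (k0s : k0 ≤ Real.cosh s) :
    h0 * k0 + (h1 * k1 + h2 * k2 + h3 * k3) ≤ Real.cosh (r + s) := by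
  have hsr : 0 ≤ Real.sinh r := Real.sinh_nonneg_iff.2 hr
  have hss : 0 ≤ Real.sinh s := Real.sinh_nonneg_iff.2 hs
  have e1 := Real.cosh_sq r
  have e2 := Real.cosh_sq s
  have b1 : h1 ^ 2 + h2 ^ 2 + h3 ^ 2 ≤ Real.sinh r ^ 2 := by
    have := pow_le_pow_left₀ hh0 h0r 2
    linarith
  have b2 : k1 ^ 2 + k2 ^ 2 + k3 ^ 2 ≤ Real.sinh s ^ 2 := by
    have := pow_le_pow_left₀ hk0 k0s 2
    linarith
  have cs : (h1 * k1 + h2 * k2 + h3 * k3) ^ 2 ≤ (Real.sinh r * Real.sinh s) ^ 2 := by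
    have := mul_le_mul b1 b2 (by positivity) (by positivity)
    nlinarith [sq_nonneg (h1 * k2 - h2 * k1), sq_nonneg (h1 * k3 - h3 * k1),
      sq_nonneg (h2 * k3 - h3 * k2)]
  have c1 := abs_le_of_sq_le_sq' cs (by positivity)
  have c2 := mul_le_mul h0r k0s hk0 (hh0.trans h0r)
  rw [Real.cosh_add]
  linarith [c1.2]

/-- `M` lies in `B` and moves the base point of hyperbolic space by at most `ρ`, where `ρ ≥ 0`. -/
def Short (M : Matrix (Fin 2) (Fin 2) ℂ) (ρ : ℝ) : Prop :=
  0 ≤ ρ ∧ ∃ a : ℝ, 0 < a ∧ ∃ z : ℂ, M = upperB a z ∧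
    a ^ 2 + a⁻¹ ^ 2 + (z.re ^ 2 + z.im ^ 2) ≤ 2 * Real.cosh ρ

lemma Short.mul {M N : Matrix (Fin 2) (Fin 2) ℂ} {r s : ℝ} (hM : Short M r) (hN : Short N s) :
    Short (M * N) (r + s) := by
  obtain ⟨hr, a, ha, z, rfl, hz⟩ := hM
  obtain ⟨hs, c, hc, w, rfl, hw⟩ := hN
  refine ⟨add_nonneg hr hs, a * c, mul_pos ha hc, _, upperB_mul a c z w, ?_⟩
  have hα : a * a⁻¹ = 1 := mul_inv_cancel₀ ha.ne'
  have hγ : c * c⁻¹ = 1 := mul_inv_cancel₀ hc.ne'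
  rw [mul_inv]
  simp only [Complex.add_re, Complex.add_im, Complex.mul_re, Complex.mul_im, Complex.ofReal_re,
    Complex.ofReal_im]
  generalize a⁻¹ = α at *
  generalize c⁻¹ = γ at *
  -- Minkowski coordinates of `M* M` and of `N N*`
  have key := minkowski_le (h0 := (a ^ 2 + (α ^ 2 + (z.re ^ 2 + z.im ^ 2))) / 2)
    (h1 := a * z.re) (h2 := a * z.im) (h3 := (a ^ 2 - (α ^ 2 + (z.re ^ 2 + z.im ^ 2))) / 2)
    (k0 := (c ^ 2 + (w.re ^ 2 + w.im ^ 2) + γ ^ 2) / 2) (k1 := γ * w.re) (k2 := γ * w.im)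
    (k3 := (c ^ 2 + (w.re ^ 2 + w.im ^ 2) - γ ^ 2) / 2) hr hs
    (by linear_combination (a * α + 1) * hα) (by linear_combination (c * γ + 1) * hγ)
    (by positivity) (by positivity) (by linarith) (by linarith)
  nlinarith [key]

lemma Short.one : Short 1 0 :=
  ⟨le_rfl, 1, one_pos, 0, upperB_one.symm, by norm_num⟩

lemma Short.exists_inv {M : Matrix (Fin 2) (Fin 2) ℂ} {r : ℝ} (hM : Short M r) :
    ∃ N, Short N r ∧ N * M = 1 ∧ M * N = 1 := by
  obtain ⟨hr, a, ha, z, rfl, hz⟩ := hM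
  have h : (a : ℂ) ≠ 0 := by exact_mod_cast ha.ne'
  refine ⟨upperB a⁻¹ (-z), ⟨hr, a⁻¹, inv_pos.2 ha, -z, rfl, ?_⟩, ?_, ?_⟩
  · simp only [inv_inv, Complex.neg_re, Complex.neg_im]
    linarith
  · rw [upperB_mul, ← upperB_one, inv_mul_cancel₀ ha.ne']
    congr 1
    push_cast
    ring
  · rw [upperB_mul, ← upperB_one, mul_inv_cancel₀ ha.ne']
    congr 1
    push_cast
    field_simp
    ring

lemma Short.list_prod {ι : Type*} (b : ι → Matrix (Fin 2) (Fin 2) ℂ) (r : ι → ℝ)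
    (h : ∀ i, Short (b i) (r i)) (l : List ι) : Short (l.map b).prod (l.map r).sum := by
  induction l with
  | nil => simpa using Short.one
  | cons i l ih => simpa using (h i).mul ih

/-! ### Construction of polygons -/

/-- Law of cosines: over a side `(c, w)` of length `d` there is a hyperbolic triangle whose other
sides have lengths `r` and `e`. -/
lemma exists_triangle {c w d r e : ℝ} (hc : 0 < c)
    (hcw : c ^ 2 + c⁻¹ ^ 2 + w ^ 2 = 2 * Real.cosh d) (hr : 0 ≤ r) (hd : 0 ≤ d) (he : 0 ≤ e)
    (h1 : r ≤ d + e) (h2 : d ≤ r + e) (h3 : e ≤ r + d) :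
    ∃ a u a' u' : ℝ, 0 < a ∧ 0 < a' ∧ a ^ 2 + a⁻¹ ^ 2 + u ^ 2 = 2 * Real.cosh r ∧
      a' ^ 2 + a'⁻¹ ^ 2 + u' ^ 2 = 2 * Real.cosh e ∧
      a * a' = c ∧ a * u' + u * a'⁻¹ = w := by
  have hγ : c * c⁻¹ = 1 := mul_inv_cancel₀ hc.ne'
  -- The direction `(p, q)` of the side, a unit vector in the tangent plane at the base point.
  obtain ⟨p, q, hpq, hp, hq⟩ : ∃ p q : ℝ, p ^ 2 + q ^ 2 = 1 ∧ Real.sinh d * p = w * c⁻¹ ∧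
      Real.sinh d * q = (c ^ 2 + w ^ 2 - c⁻¹ ^ 2) / 2 := by
    have hs : (w * c⁻¹) ^ 2 + ((c ^ 2 + w ^ 2 - c⁻¹ ^ 2) / 2) ^ 2 = Real.sinh d ^ 2 := by
      have := Real.cosh_sq d
      have h : Real.cosh d = (c ^ 2 + c⁻¹ ^ 2 + w ^ 2) / 2 := by linarith
      rw [h] at this
      linear_combination this + (-c * c⁻¹ - 1) * hγ
    by_cases h0 : Real.sinh d = 0
    · refine ⟨1, 0, by norm_num, ?_, ?_⟩
      · rw [h0] at hs ⊢
        nlinarith [sq_nonneg (w * c⁻¹), sq_nonneg ((c ^ 2 + w ^ 2 - c⁻¹ ^ 2) / 2)]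
      · rw [h0] at hs ⊢
        nlinarith [sq_nonneg (w * c⁻¹), sq_nonneg ((c ^ 2 + w ^ 2 - c⁻¹ ^ 2) / 2)]
    · refine ⟨w * c⁻¹ / Real.sinh d, (c ^ 2 + w ^ 2 - c⁻¹ ^ 2) / 2 / Real.sinh d, ?_,
        mul_div_cancel₀ _ h0, mul_div_cancel₀ _ h0⟩
      rw [div_pow _ (Real.sinh d), div_pow _ (Real.sinh d), ← add_div, hs]
      exact div_self (pow_ne_zero 2 h0)
  have hsr : 0 ≤ Real.sinh r := Real.sinh_nonneg_iff.2 hr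
  have hsd : 0 ≤ Real.sinh d := Real.sinh_nonneg_iff.2 hd
  -- The cosine `C` of the angle between the two sides at the base point.
  obtain ⟨C, S, hCS, hC⟩ : ∃ C S : ℝ, C ^ 2 + S ^ 2 = 1 ∧
      Real.sinh r * Real.sinh d * C = Real.cosh r * Real.cosh d - Real.cosh e := by
    have u1 : Real.cosh e ≤ Real.cosh r * Real.cosh d + Real.sinh r * Real.sinh d := by
      rw [← Real.cosh_add, Real.cosh_le_cosh, abs_of_nonneg he, abs_of_nonneg (by linarith)]
      exact h3
    have u2 : Real.cosh r * Real.cosh d - Real.sinh r * Real.sinh d ≤ Real.cosh e := by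
      rw [← Real.cosh_sub, Real.cosh_le_cosh, abs_of_nonneg he, abs_le]
      constructor <;> linarith
    by_cases h0 : Real.sinh r * Real.sinh d = 0
    · exact ⟨1, 0, by norm_num, by rw [h0] at u1 u2 ⊢; linarith⟩
    · have hpos : 0 < Real.sinh r * Real.sinh d := lt_of_le_of_ne (mul_nonneg hsr hsd) (Ne.symm h0)
      set C := (Real.cosh r * Real.cosh d - Real.cosh e) / (Real.sinh r * Real.sinh d) with hC
      have c1 : C ≤ 1 := by rw [hC, div_le_one hpos]; linarith
      have c2 : -1 ≤ C := by rw [hC, le_div_iff₀ hpos]; linarith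
      refine ⟨C, Real.sqrt (1 - C ^ 2), ?_, mul_div_cancel₀ _ h0⟩
      rw [Real.sq_sqrt (by nlinarith)]
      ring
  -- Rotating `(p, q)` by the angle gives the direction of the third vertex `(X0, X1, X2)`.
  set X0 := Real.cosh r with hX0
  set X1 := Real.sinh r * (C * p - S * q) with hX1
  set X2 := Real.sinh r * (S * p + C * q) with hX2
  have hX : X0 ^ 2 = 1 + (X1 ^ 2 + X2 ^ 2) := by
    have := Real.cosh_sq r
    rw [hX1, hX2]
    linear_combination this - Real.sinh r ^ 2 * (C ^ 2 + S ^ 2) * hpq - Real.sinh r ^ 2 * hCS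
  have hX0p : 0 < X0 := Real.cosh_pos r
  have hlt : 0 < X0 - X2 := by
    have := abs_lt_of_sq_lt_sq' (show X2 ^ 2 < X0 ^ 2 by nlinarith [sq_nonneg X1]) hX0p.le
    linarith [this.2]
  have hprod : X0 * Real.cosh d - X1 * (w * c⁻¹) - X2 * ((c ^ 2 + w ^ 2 - c⁻¹ ^ 2) / 2)
      = Real.cosh e := by
    rw [← hp, ← hq, hX1, hX2]
    linear_combination -hC - Real.sinh r * Real.sinh d * C * hpq
  -- The matrix of the third vertex is determined by `α⁻² = X0 - X2` and `u = α⁻¹ X1`.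
  set α := Real.sqrt (X0 - X2) with hα
  have hα0 : 0 < α := Real.sqrt_pos.2 hlt
  have hα2 : α ^ 2 = X0 - X2 := Real.sq_sqrt hlt.le
  have ha : α⁻¹ * α = 1 := inv_mul_cancel₀ hα0.ne'
  have hP : α⁻¹ ^ 2 + (α⁻¹ * X1) ^ 2 = X0 + X2 := by
    have : α⁻¹ ^ 2 * (X0 - X2) = 1 := by rw [← hα2, ← mul_pow, ha, one_pow]
    linear_combination (X0 + X2) * this - α⁻¹ ^ 2 * hX
  refine ⟨α⁻¹, α⁻¹ * X1, c * α, w * α - α⁻¹ * X1 * c⁻¹, inv_pos.2 hα0, mul_pos hc hα0, ?_, ?_, ?_, ?_⟩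
  · rw [inv_inv]
    linear_combination hP + hα2
  · rw [mul_inv]
    have hch : Real.cosh d = (c ^ 2 + c⁻¹ ^ 2 + w ^ 2) / 2 := by linarith
    rw [hch] at hprod
    linear_combination 2 * hprod + c⁻¹ ^ 2 * hP + (c ^ 2 + w ^ 2) * hα2 - 2 * w * c⁻¹ * X1 * ha
  · linear_combination c * ha
  · rw [mul_inv]
    linear_combination w * ha

/-- A real element of `B` of length `d` is a product of elements of lengths `r i` as soon as `d` and
the `r i` satisfy the polygon inequalities. -/
lemma exists_factors (n : ℕ) : ∀ (r : Fin n → ℝ), (∀ i, 0 ≤ r i) → ∀ c w d : ℝ, 0 < c → 0 ≤ d →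
    c ^ 2 + c⁻¹ ^ 2 + w ^ 2 = 2 * Real.cosh d → d ≤ ∑ i, r i →
    (∀ i, 2 * r i ≤ d + ∑ j, r j) →
    ∃ b : Fin n → Matrix (Fin 2) (Fin 2) ℂ, (∀ i, InB (b i)) ∧
      (List.ofFn b).prod = upperB c w ∧
      (∀ i, Matrix.trace (b i * (b i)ᴴ) = ((2 * Real.cosh (r i) : ℝ) : ℂ)) := by
  induction n with
  | zero =>
    intro r _ c w d hc hd hcw hds _
    have hd0 : d = 0 := le_antisymm (by simpa using hds) hd
    rw [hd0, Real.cosh_zero] at hcw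
    have hγ : c * c⁻¹ = 1 := mul_inv_cancel₀ hc.ne'
    have hw : w = 0 := by nlinarith [sq_nonneg (c - c⁻¹), sq_nonneg w]
    have hcc : c - c⁻¹ = 0 := by nlinarith [sq_nonneg (c - c⁻¹), sq_nonneg w]
    have h1 : c = 1 := by
      have : c⁻¹ = c := by linarith
      rw [this] at hγ
      nlinarith
    refine ⟨fun i => i.elim0, fun i => i.elim0, ?_, fun i => i.elim0⟩
    rw [hw, h1, Complex.ofReal_zero, upperB_one]
    simp
  | succ n ih =>
    intro r hr c w d hc hd hcw hds hri
    rw [Fin.sum_univ_succ] at hds hri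
    have hle : ∀ i : Fin n, r i.succ ≤ ∑ j : Fin n, r j.succ := fun i =>
      Finset.single_le_sum (f := fun j : Fin n => r j.succ) (fun j _ => hr j.succ)
        (Finset.mem_univ i)
    have hS : 0 ≤ ∑ j : Fin n, r j.succ := Finset.sum_nonneg fun j _ => hr j.succ
    have h0 := hr 0
    have hr0 := hri 0
    obtain ⟨e, he, h1, h2, h3, heS, hrest⟩ : ∃ e : ℝ, 0 ≤ e ∧ r 0 ≤ d + e ∧ d ≤ r 0 + e ∧
        e ≤ r 0 + d ∧ e ≤ ∑ j : Fin n, r j.succ ∧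
        ∀ i : Fin n, 2 * r i.succ ≤ e + ∑ j : Fin n, r j.succ := by
      rcases le_total (r 0 + d) (∑ j : Fin n, r j.succ) with h | h
      · exact ⟨r 0 + d, by linarith, by linarith, by linarith, le_rfl, h,
          fun i => by linarith [hri i.succ]⟩
      · exact ⟨∑ j : Fin n, r j.succ, hS, by linarith, by linarith, h, le_rfl,
          fun i => by linarith [hle i]⟩
    obtain ⟨a, u, a', u', ha, ha', hau, hau', hm, hmu⟩ :=
      exists_triangle hc hcw h0 hd he h1 h2 h3
    obtain ⟨b, hbB, hbp, hbt⟩ :=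
      ih (fun i => r i.succ) (fun i => hr i.succ) a' u' e ha' he hau' heS hrest
    refine ⟨Fin.cons (upperB a u) b, ?_, ?_, ?_⟩
    · intro i
      refine Fin.cases ?_ (fun j => ?_) i
      · exact inB_upperB ha _
      · exact hbB j
    · rw [List.ofFn_succ, List.prod_cons]
      simp only [Fin.cons_zero, Fin.cons_succ]
      rw [hbp, upperB_mul, hm, ← hmu]
      push_cast
      rfl
    · intro i
      refine Fin.cases ?_ (fun j => ?_) i
      · rw [Fin.cons_zero, trace_upperB, ← hau]
        simp
      · rw [Fin.cons_succ]
        exact hbt j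

/-- The image of the side-length map on closed n-gons in hyperbolic 3-space is the
polyhedral cone `Dₙ`. -/
theorem stmt0 (n : ℕ) (hn : 1 ≤ n) (r : Fin n → ℝ) (hr : ∀ i, 0 ≤ r i) :
    (∃ b : Fin n → Matrix (Fin 2) (Fin 2) ℂ,
        (∀ i, InB (b i)) ∧
        (List.ofFn b).prod = 1 ∧
        (∀ i, Matrix.trace (b i * (b i)ᴴ) = ((2 * Real.cosh (r i) : ℝ) : ℂ))) ↔
    (∀ i, r i ≤ ∑ j ∈ Finset.univ.erase i, r j) := by
  constructor
  · rintro ⟨b, hB, hprod, htr⟩ i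
    have hshort : ∀ j, Short (b j) (r j) := by
      intro j
      obtain ⟨a, ha, z, hz⟩ := (hB j).exists_eq
      have h := htr j
      rw [hz, trace_upperB] at h
      exact ⟨hr j, a, ha, z, hz, (Complex.ofReal_injective h).le⟩
    obtain ⟨l₁, l₂, hl⟩ := List.append_of_mem (List.mem_finRange i)
    rw [List.ofFn_eq_map, hl, List.map_append, List.map_cons, List.prod_append,
      List.prod_cons] at hprod
    obtain ⟨P', hP', hPl, -⟩ := (Short.list_prod b r hshort l₁).exists_inv
    obtain ⟨Q', hQ', -, hQr⟩ := (Short.list_prod b r hshort l₂).exists_inv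
    have hbi : b i = P' * Q' := by
      calc b i = (P' * (l₁.map b).prod) * b i * ((l₂.map b).prod * Q') := by
            rw [hPl, hQr, one_mul, mul_one]
        _ = P' * ((l₁.map b).prod * (b i * (l₂.map b).prod)) * Q' := by
            simp only [mul_assoc]
        _ = P' * Q' := by rw [hprod, mul_one]
    obtain ⟨hρ, a, ha, z, hz, hle⟩ := hP'.mul hQ'
    have h := htr i
    rw [hbi, hz, trace_upperB] at h
    rw [Complex.ofReal_injective h] at hle
    have hcosh : Real.cosh (r i) ≤ Real.cosh ((l₁.map r).sum + (l₂.map r).sum) := by linarith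
    rw [Real.cosh_le_cosh, abs_of_nonneg (hr i), abs_of_nonneg hρ] at hcosh
    have hsum : ∑ j, r j = (l₁.map r).sum + (r i + (l₂.map r).sum) := by
      rw [Fin.sum_univ_def, hl, List.map_append, List.map_cons, List.sum_append, List.sum_cons]
    rw [Finset.sum_erase_eq_sub (Finset.mem_univ i), hsum]
    linarith
  · intro h
    obtain ⟨b, hB, hprod, htr⟩ := exists_factors n r hr 1 0 0 one_pos le_rfl
      (by norm_num) (Finset.sum_nonneg fun i _ => hr i) (fun i => by
        have := h i
        rw [Finset.sum_erase_eq_sub (Finset.mem_univ i)] at this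
        linarith)
    exact ⟨b, hB, by rw [hprod, Complex.ofReal_zero, upperB_one], htr⟩
end

section
/- Let n ≥ 4, let r = (r₁,…,rₙ) be nonnegative reals and ℓ = (ℓ₁,…,ℓ_{n−3}) be nonnegative reals. Then there exist b₁,…,bₙ ∈ B with b₁⋯bₙ = 1, tr(bᵢ bᵢ*) = 2·cosh(rᵢ) for 1 ≤ i ≤ n, and tr((b₁⋯b_{k+1})(b₁⋯b_{k+1})*) = 2·cosh(ℓ_k) for 1 ≤ k ≤ n−3, if and only if the following 3(n−2) triangle inequalities hold: |r₁ − r₂| ≤ ℓ₁ ≤ r₁ + r₂; |ℓ_{k−1} − r_{k+1}| ≤ ℓ_k ≤ ℓ_{k−1} + r_{k+1} for 2 ≤ k ≤ n−3; and |r_{n−1} − rₙ| ≤ ℓ_{n−3} ≤ r_{n−1} + rₙ. (This describes the momentum polyhedron of the bending torus action: the achievable lengths of the diagonals d_{1,k+2} of a closed hyperbolic n-gon with side lengths r.) -/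
/-!
Write `T b = tr (b b*)`, so that `T b = 2 cosh d(*, b *)`. For `b ∈ B` with diagonal `s, u`
(`s u = 1`) and corner `x + i y`, the positive Hermitian matrices `b* b` and `b b*` are of the form
`cosh a · 1 + (traceless part)`, where the traceless part is a vector of `ℝ³` of length `sinh a`.
Hence `T (b c) = tr (b* b c c*) = 2 (cosh a cosh c + p · q)` with `|p| = sinh a` and
`|q| = sinh c`. Cauchy–Schwarz bounds `T (b c) / 2` between `cosh (a - c)` and `cosh (a + c)`, which
is the triangle inequality (`upper_triangle`). Conversely any prescribed value in this range is
attained by a suitable angle between `p` and `q`, and every positive definite matrix of determinant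
one is `c c*` with `c ∈ B` (Cholesky); working with real matrices, so that `p, q ∈ ℝ²`, suffices
(`exists_next`).

The statement becomes uniform for the full sequence of distances from the first vertex,
`M = (0, r₁, ℓ₁, …, ℓ_{n-3}, rₙ, 0)`: each of its steps `M k → M (k + 1)` is a triangle with third
side `r (k + 1)`, and closedness of the polygon is the condition `M n = 0`, since `1` is the only
element of `B` with `T = 2`.
-/

open Matrix

/-! ### Coordinates on the group `B` -/

/-- The matrix `[[s, x + i y], [0, u]]`; it lies in `B` when `0 < s` and `s * u = 1`. -/
noncomputable def upperMat (s x y u : ℝ) : Matrix (Fin 2) (Fin 2) ℂ :=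
  !![(s : ℂ), (x : ℂ) + (y : ℂ) * Complex.I; 0, (u : ℂ)]

lemma inB_upperMat {s x y u : ℝ} (hs : 0 < s) (hsu : s * u = 1) : InB (upperMat s x y u) := by
  have hu : 0 < u := by
    by_contra h
    nlinarith [mul_nonneg hs.le (sub_nonneg.2 (not_lt.1 h))]
  refine ⟨?_, ?_⟩
  · simp only [upperMat, Matrix.det_fin_two_of, mul_zero, sub_zero]
    exact_mod_cast hsu
  · simp [upperMat, hs, hu]

lemma InB.exists_upperMat {b : Matrix (Fin 2) (Fin 2) ℂ} (h : InB b) :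
    ∃ s x y u : ℝ, 0 < s ∧ s * u = 1 ∧ b = upperMat s x y u := by
  obtain ⟨hd, h10, h00, hp, h11, hq⟩ := h
  have e0 : b 0 0 = ((b 0 0).re : ℂ) := Complex.ext (by simp) (by simp [h00])
  have e1 : b 1 1 = ((b 1 1).re : ℂ) := Complex.ext (by simp) (by simp [h11])
  refine ⟨(b 0 0).re, (b 0 1).re, (b 0 1).im, (b 1 1).re, hp, ?_, ?_⟩
  · rw [Matrix.det_fin_two, h10, mul_zero, sub_zero, e0, e1] at hd
    exact_mod_cast hd
  · ext i j
    fin_cases i <;> fin_cases j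
    · simpa [upperMat] using e0
    · simp [upperMat, Complex.re_add_im]
    · simpa [upperMat] using h10
    · simpa [upperMat] using e1

lemma upperMat_mul (s x y u t v w z : ℝ) :
    upperMat s x y u * upperMat t v w z
      = upperMat (s * t) (s * v + x * z) (s * w + y * z) (u * z) := by
  ext i j
  fin_cases i <;> fin_cases j <;> simp [upperMat, Matrix.mul_apply, Fin.sum_univ_two]
  ring

lemma upperMat_one : upperMat 1 0 0 1 = 1 := by
  ext i j
  fin_cases i <;> fin_cases j <;> simp [upperMat]

lemma trace_upperMat (s x y u : ℝ) :
    Matrix.trace (upperMat s x y u * (upperMat s x y u)ᴴ)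
      = ((s ^ 2 + x ^ 2 + y ^ 2 + u ^ 2 : ℝ) : ℂ) := by
  rw [Matrix.trace_fin_two, Matrix.mul_apply, Matrix.mul_apply]
  apply Complex.ext <;>
    simp [upperMat, Fin.sum_univ_two, Matrix.conjTranspose_apply, pow_two] <;> ring

lemma InB.mul {a b : Matrix (Fin 2) (Fin 2) ℂ} (ha : InB a) (hb : InB b) : InB (a * b) := by
  obtain ⟨s, x, y, u, hs, hsu, rfl⟩ := ha.exists_upperMat
  obtain ⟨t, v, w, z, ht, htz, rfl⟩ := hb.exists_upperMat
  rw [upperMat_mul]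
  refine inB_upperMat (mul_pos hs ht) ?_
  linear_combination t * z * hsu + htz

/-! ### Hyperbolic triangles in coordinates -/

/-- The triangle inequality for the triangle with vertices `*`, `p *`, `p c *`. -/
lemma upper_triangle {s x y u t v w z a c l : ℝ} (hsu : s * u = 1) (htz : t * z = 1)
    (ha0 : 0 ≤ a) (hc0 : 0 ≤ c) (hl0 : 0 ≤ l)
    (ha : s ^ 2 + x ^ 2 + y ^ 2 + u ^ 2 = 2 * Real.cosh a)
    (hc : t ^ 2 + v ^ 2 + w ^ 2 + z ^ 2 = 2 * Real.cosh c)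
    (hl : (s * t) ^ 2 + (s * v + x * z) ^ 2 + (s * w + y * z) ^ 2 + (u * z) ^ 2
      = 2 * Real.cosh l) :
    |a - c| ≤ l ∧ l ≤ a + c := by
  have hsa : 0 ≤ Real.sinh a := Real.sinh_nonneg_iff.2 ha0
  have hsc : 0 ≤ Real.sinh c := Real.sinh_nonneg_iff.2 hc0
  -- Twice the coordinates of the traceless parts of `p* p` and `c c*`.
  obtain ⟨p1, hp1⟩ : ∃ p, p = s ^ 2 - x ^ 2 - y ^ 2 - u ^ 2 := ⟨_, rfl⟩
  obtain ⟨q1, hq1⟩ : ∃ q, q = t ^ 2 + v ^ 2 + w ^ 2 - z ^ 2 := ⟨_, rfl⟩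
  have hp : p1 ^ 2 + (2 * s * x) ^ 2 + (2 * s * y) ^ 2 = (2 * Real.sinh a) ^ 2 := by
    have := Real.cosh_sq a
    have e : (2 * Real.sinh a) ^ 2 = (2 * Real.cosh a) ^ 2 - 4 := by
      rw [mul_pow, mul_pow, this]; ring
    rw [e, ← ha, hp1]
    linear_combination (-4 * (s * u + 1)) * hsu
  have hq : q1 ^ 2 + (2 * v * z) ^ 2 + (2 * w * z) ^ 2 = (2 * Real.sinh c) ^ 2 := by
    have := Real.cosh_sq c
    have e : (2 * Real.sinh c) ^ 2 = (2 * Real.cosh c) ^ 2 - 4 := by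
      rw [mul_pow, mul_pow, this]; ring
    rw [e, ← hc, hq1]
    linear_combination (-4 * (t * z + 1)) * htz
  obtain ⟨D, hD⟩ : ∃ D, D = p1 * q1 + (2 * s * x) * (2 * v * z) + (2 * s * y) * (2 * w * z) :=
    ⟨_, rfl⟩
  have hT : 4 * Real.cosh l = 4 * (Real.cosh a * Real.cosh c) + D := by
    have : 4 * (Real.cosh a * Real.cosh c) = (2 * Real.cosh a) * (2 * Real.cosh c) := by ring
    rw [this, ← ha, ← hc, hD, hp1, hq1]
    linear_combination (-2) * hl
  have hCS : D ^ 2 ≤ (4 * (Real.sinh a * Real.sinh c)) ^ 2 := by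
    have : (4 * (Real.sinh a * Real.sinh c)) ^ 2
        = (2 * Real.sinh a) ^ 2 * (2 * Real.sinh c) ^ 2 := by ring
    rw [this, ← hp, ← hq, hD]
    linarith [sq_nonneg (p1 * (2 * v * z) - (2 * s * x) * q1),
      sq_nonneg (p1 * (2 * w * z) - (2 * s * y) * q1),
      sq_nonneg ((2 * s * x) * (2 * w * z) - (2 * s * y) * (2 * v * z))]
  obtain ⟨h1, h2⟩ := abs_le_of_sq_le_sq' hCS (by positivity)
  constructor
  · rw [← abs_of_nonneg hl0]
    rw [← Real.cosh_le_cosh, Real.cosh_sub]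
    linarith
  · rw [← abs_of_nonneg hl0, ← abs_of_nonneg (add_nonneg ha0 hc0)]
    rw [← Real.cosh_le_cosh, Real.cosh_add]
    linarith

/-- Planar version of the existence of an angle: a vector `q` of length `S'` with prescribed
inner product `m` with a given `p` of length `S`. -/
lemma exists_vec {p1 p2 S S' m : ℝ} (hp : p1 ^ 2 + p2 ^ 2 = S ^ 2) (hm : |m| ≤ S * S') :
    ∃ q1 q2 : ℝ, q1 ^ 2 + q2 ^ 2 = S' ^ 2 ∧ p1 * q1 + p2 * q2 = m := by
  have hm2 : m ^ 2 ≤ (S * S') ^ 2 := sq_le_sq' (abs_le.1 hm).1 (abs_le.1 hm).2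
  rcases eq_or_ne S 0 with rfl | hS
  · have h1 : p1 = 0 := by nlinarith [sq_nonneg p1, sq_nonneg p2]
    have h2 : p2 = 0 := by nlinarith [sq_nonneg p1, sq_nonneg p2]
    have h3 : m = 0 := by nlinarith [sq_nonneg m]
    exact ⟨S', 0, by ring, by rw [h1, h2, h3]; ring⟩
  · -- `q = (m p + k p^⊥) / S²`, where `k² = S² S'² - m²`
    set k := Real.sqrt ((S * S') ^ 2 - m ^ 2) with hk
    have hk2 : k ^ 2 = (S * S') ^ 2 - m ^ 2 := Real.sq_sqrt (by linarith)
    refine ⟨(m * p1 - k * p2) / S ^ 2, (m * p2 + k * p1) / S ^ 2, ?_, ?_⟩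
    · field_simp
      linear_combination (m ^ 2 + k ^ 2) * hp + S ^ 2 * hk2
    · field_simp
      linear_combination m * hp

/-- Every triangle with admissible side lengths can be erected on a given side `* , p *`, with all
matrices real. -/
lemma exists_next {s x u a c l : ℝ} (hsu : s * u = 1)
    (ha0 : 0 ≤ a) (hc0 : 0 ≤ c) (hl0 : 0 ≤ l)
    (ha : s ^ 2 + x ^ 2 + u ^ 2 = 2 * Real.cosh a) (h1 : |a - c| ≤ l) (h2 : l ≤ a + c) :
    ∃ t v z : ℝ, 0 < t ∧ t * z = 1 ∧ t ^ 2 + v ^ 2 + z ^ 2 = 2 * Real.cosh c ∧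
      (s * t) ^ 2 + (s * v + x * z) ^ 2 + (u * z) ^ 2 = 2 * Real.cosh l := by
  rw [← abs_of_nonneg hl0, ← Real.cosh_le_cosh, Real.cosh_sub] at h1
  rw [← abs_of_nonneg hl0, ← abs_of_nonneg (add_nonneg ha0 hc0), ← Real.cosh_le_cosh,
    Real.cosh_add] at h2
  have hp : ((s ^ 2 - x ^ 2 - u ^ 2) / 2) ^ 2 + (s * x) ^ 2 = Real.sinh a ^ 2 := by
    have e : Real.sinh a ^ 2 = Real.cosh a ^ 2 - 1 := by rw [Real.cosh_sq]; ring
    have e2 : Real.cosh a = (s ^ 2 + x ^ 2 + u ^ 2) / 2 := by linarith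
    rw [e, e2]
    linear_combination (-(s * u + 1)) * hsu
  obtain ⟨q1, q2, hq, hpq⟩ := exists_vec (m := Real.cosh l - Real.cosh a * Real.cosh c) hp
    (S' := Real.sinh c) (abs_le.2 ⟨by linarith, by linarith⟩)
  -- Cholesky factorisation of `[[cosh c + q1, q2], [q2, cosh c - q1]]`
  have hcc := Real.cosh_sq c
  have hpos : 0 < Real.cosh c - q1 := by
    have : q1 ^ 2 < Real.cosh c ^ 2 := by nlinarith [sq_nonneg q2]
    linarith [(abs_lt_of_sq_lt_sq' this (Real.cosh_pos c).le).2]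
  set z := Real.sqrt (Real.cosh c - q1) with hz
  have hz0 : 0 < z := Real.sqrt_pos.2 hpos
  have hz2 : z ^ 2 = Real.cosh c - q1 := Real.sq_sqrt hpos.le
  have hzi : z⁻¹ * z = 1 := inv_mul_cancel₀ hz0.ne'
  have hvz : q2 * z⁻¹ * z = q2 := by rw [mul_assoc, hzi, mul_one]
  have hQ : z⁻¹ ^ 2 + (q2 * z⁻¹) ^ 2 = Real.cosh c + q1 := by
    have : z⁻¹ ^ 2 + (q2 * z⁻¹) ^ 2 = (1 + q2 ^ 2) * (z ^ 2)⁻¹ := by rw [inv_pow]; ring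
    rw [this, hz2, ← div_eq_mul_inv, div_eq_iff hpos.ne']
    linear_combination hq - hcc
  refine ⟨z⁻¹, q2 * z⁻¹, z, inv_pos.2 hz0, hzi, by linarith, ?_⟩
  have e : (s * z⁻¹) ^ 2 + (s * (q2 * z⁻¹) + x * z) ^ 2 + (u * z) ^ 2
      = s ^ 2 * (z⁻¹ ^ 2 + (q2 * z⁻¹) ^ 2) + 2 * s * x * (q2 * z⁻¹ * z)
        + (x ^ 2 + u ^ 2) * z ^ 2 := by ring
  rw [e, hvz, hQ, hz2]
  linear_combination 2 * hpq + Real.cosh c * ha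

/-! ### Partial products and lengths -/

/-- The partial product `b₁ ⋯ b_k`. -/
noncomputable def partProd (b : ℕ → Matrix (Fin 2) (Fin 2) ℂ) (k : ℕ) :
    Matrix (Fin 2) (Fin 2) ℂ :=
  (List.ofFn (fun i : Fin k => b (i + 1))).prod

lemma partProd_zero (b : ℕ → Matrix (Fin 2) (Fin 2) ℂ) : partProd b 0 = 1 := by
  simp [partProd]

lemma partProd_succ (b : ℕ → Matrix (Fin 2) (Fin 2) ℂ) (k : ℕ) :
    partProd b (k + 1) = partProd b k * b (k + 1) := by
  simp only [partProd]
  rw [List.ofFn_succ', List.concat_eq_append, List.prod_append, List.prod_singleton]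
  rfl

lemma partProd_congr {b b' : ℕ → Matrix (Fin 2) (Fin 2) ℂ} {k : ℕ}
    (h : ∀ i, 1 ≤ i → i ≤ k → b i = b' i) : partProd b k = partProd b' k := by
  unfold partProd
  congr 2
  funext i
  exact h _ (by omega) (by omega)

lemma inB_one : InB 1 := by
  rw [← upperMat_one]
  exact inB_upperMat one_pos (one_mul 1)

lemma trace_one_eq : Matrix.trace ((1 : Matrix (Fin 2) (Fin 2) ℂ) * 1ᴴ)
    = ((2 * Real.cosh 0 : ℝ) : ℂ) := by
  simp

lemma inB_partProd {b : ℕ → Matrix (Fin 2) (Fin 2) ℂ} {n : ℕ}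
    (h : ∀ i, 1 ≤ i → i ≤ n → InB (b i)) : ∀ k ≤ n, InB (partProd b k) := by
  intro k
  induction k with
  | zero => intro _; rw [partProd_zero]; exact inB_one
  | succ k ih =>
    intro hk
    rw [partProd_succ]
    exact (ih (by omega)).mul (h _ (by omega) hk)

lemma InB.triangle {p c : Matrix (Fin 2) (Fin 2) ℂ} (hp : InB p) (hc : InB c) {a d l : ℝ}
    (ha0 : 0 ≤ a) (hd0 : 0 ≤ d) (hl0 : 0 ≤ l)
    (ha : Matrix.trace (p * pᴴ) = ((2 * Real.cosh a : ℝ) : ℂ))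
    (hd : Matrix.trace (c * cᴴ) = ((2 * Real.cosh d : ℝ) : ℂ))
    (hl : Matrix.trace ((p * c) * (p * c)ᴴ) = ((2 * Real.cosh l : ℝ) : ℂ)) :
    |a - d| ≤ l ∧ l ≤ a + d := by
  obtain ⟨s, x, y, u, hs, hsu, rfl⟩ := hp.exists_upperMat
  obtain ⟨t, v, w, z, ht, htz, rfl⟩ := hc.exists_upperMat
  rw [trace_upperMat, Complex.ofReal_inj] at ha hd
  rw [upperMat_mul, trace_upperMat, Complex.ofReal_inj] at hl
  exact upper_triangle hsu htz ha0 hd0 hl0 ha hd hl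

/-- `*` is the only vertex at distance `0` from `*`. -/
lemma InB.eq_one {p : Matrix (Fin 2) (Fin 2) ℂ} (hp : InB p)
    (h : Matrix.trace (p * pᴴ) = ((2 * Real.cosh 0 : ℝ) : ℂ)) : p = 1 := by
  obtain ⟨s, x, y, u, hs, hsu, rfl⟩ := hp.exists_upperMat
  rw [trace_upperMat, Complex.ofReal_inj, Real.cosh_zero] at h
  have h1 : (s - u) ^ 2 + x ^ 2 + y ^ 2 = 0 := by linear_combination h - 2 * hsu
  have hx : x = 0 := by nlinarith [sq_nonneg (s - u), sq_nonneg x, sq_nonneg y]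
  have hy : y = 0 := by nlinarith [sq_nonneg (s - u), sq_nonneg x, sq_nonneg y]
  have hu : s - u = 0 := by nlinarith [sq_nonneg (s - u), sq_nonneg x, sq_nonneg y]
  have hs1 : s = 1 := by nlinarith
  have hu1 : u = 1 := by linarith
  rw [hs1, hu1, hx, hy, upperMat_one]

/-- Inverse elements of `B` move `*` by the same distance. -/
lemma InB.trace_eq_of_mul_eq_one {p c : Matrix (Fin 2) (Fin 2) ℂ} (hp : InB p)
    (h : p * c = 1) : Matrix.trace (p * pᴴ) = Matrix.trace (c * cᴴ) := by
  obtain ⟨s, x, y, u, hs, hsu, rfl⟩ := hp.exists_upperMat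
  have hinv : upperMat u (-x) (-y) s * upperMat s x y u = 1 := by
    rw [upperMat_mul, ← upperMat_one]
    congr 1 <;> linarith
  have hc' : c = upperMat u (-x) (-y) s := (left_inv_eq_right_inv hinv h).symm
  rw [hc', trace_upperMat, trace_upperMat]
  congr 1
  ring

/-! ### Polygonal paths and closed polygons -/

/-- Polygonal paths from `*` with side lengths `r` and distances `M` from `*` exist as soon as all
triangle inequalities hold; they can be taken in the real hyperbolic plane. -/
lemma exists_path {r M : ℕ → ℝ} (h0 : M 0 = 0) (n : ℕ)
    (hr : ∀ i, 1 ≤ i → i ≤ n → 0 ≤ r i) (hM : ∀ k ≤ n, 0 ≤ M k)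
    (h : ∀ k < n, |M k - r (k + 1)| ≤ M (k + 1) ∧ M (k + 1) ≤ M k + r (k + 1)) :
    ∃ b : ℕ → Matrix (Fin 2) (Fin 2) ℂ,
      (∀ i, 1 ≤ i → i ≤ n → InB (b i)) ∧
      (∀ i, 1 ≤ i → i ≤ n → Matrix.trace (b i * (b i)ᴴ) = ((2 * Real.cosh (r i) : ℝ) : ℂ)) ∧
      (∀ k ≤ n, Matrix.trace (partProd b k * (partProd b k)ᴴ)
        = ((2 * Real.cosh (M k) : ℝ) : ℂ)) ∧
      ∃ s x u : ℝ, 0 < s ∧ s * u = 1 ∧ partProd b n = upperMat s x 0 u := by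
  induction n with
  | zero =>
    refine ⟨fun _ => 1, by intros; omega, by intros; omega, ?_, 1, 0, 1, one_pos, one_mul 1, ?_⟩
    · intro k hk
      obtain rfl : k = 0 := by omega
      rw [partProd_zero, h0, trace_one_eq]
    · rw [partProd_zero, upperMat_one]
  | succ n ih =>
    obtain ⟨b, hB, hT, hP, s, x, u, hs, hsu, hp⟩ := ih (fun i h1 h2 => hr i h1 (by omega))
      (fun k hk => hM k (by omega)) (fun k hk => h k (by omega))
    have ha := hP n le_rfl
    rw [hp, trace_upperMat, Complex.ofReal_inj] at ha
    obtain ⟨t, v, z, ht, htz, hc, hl⟩ := exists_next (a := M n) (c := r (n + 1)) (l := M (n + 1))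
      (x := x) hsu (hM n (by omega)) (hr _ (by omega) le_rfl) (hM _ le_rfl) (by linarith)
      (h n (by omega)).1 (h n (by omega)).2
    set b' := Function.update b (n + 1) (upperMat t v 0 z) with hb'
    have hold : ∀ i ≤ n, b' i = b i := fun i hi => by
      rw [hb', Function.update_of_ne (by omega)]
    have hnew : b' (n + 1) = upperMat t v 0 z := by rw [hb', Function.update_self]
    have hpp : ∀ k ≤ n, partProd b' k = partProd b k := fun k hk =>
      partProd_congr fun i _ hi => hold i (by omega)
    have hlast : partProd b' (n + 1) = upperMat (s * t) (s * v + x * z) 0 (u * z) := by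
      rw [partProd_succ, hpp n le_rfl, hp, hnew, upperMat_mul]
      congr 1
      ring
    refine ⟨b', ?_, ?_, ?_, _, _, _, mul_pos hs ht, ?_, hlast⟩
    · intro i h1 h2
      rcases Nat.lt_or_ge n i with hi | hi
      · obtain rfl : i = n + 1 := by omega
        rw [hnew]
        exact inB_upperMat ht htz
      · rw [hold i hi]
        exact hB i h1 hi
    · intro i h1 h2
      rcases Nat.lt_or_ge n i with hi | hi
      · obtain rfl : i = n + 1 := by omega
        rw [hnew, trace_upperMat, Complex.ofReal_inj]
        linarith
      · rw [hold i hi]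
        exact hT i h1 hi
    · intro k hk
      rcases Nat.lt_or_ge n k with hi | hi
      · obtain rfl : k = n + 1 := by omega
        rw [hlast, trace_upperMat, Complex.ofReal_inj]
        linarith
      · rw [hpp k hi]
        exact hP k hi
    · linear_combination t * z * hsu + htz

/-- The momentum polyhedron of the bending torus action: the achievable lengths
`ℓ₁,…,ℓ_{n-3}` of the diagonals `d_{1,k+2}` of a closed hyperbolic n-gon with side
lengths `r₁,…,rₙ` are exactly those satisfying the `3(n-2)` triangle inequalities.
All data is 1-indexed. -/
theorem stmt1 (n : ℕ) (hn : 4 ≤ n) (r ℓ : ℕ → ℝ)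
    (hr : ∀ i, 1 ≤ i → i ≤ n → 0 ≤ r i)
    (hl : ∀ k, 1 ≤ k → k ≤ n - 3 → 0 ≤ ℓ k) :
    (∃ b : ℕ → Matrix (Fin 2) (Fin 2) ℂ,
        (∀ i, 1 ≤ i → i ≤ n → InB (b i)) ∧
        (List.ofFn (fun i : Fin n => b (i + 1))).prod = 1 ∧
        (∀ i, 1 ≤ i → i ≤ n →
          Matrix.trace (b i * (b i)ᴴ) = ((2 * Real.cosh (r i) : ℝ) : ℂ)) ∧
        (∀ k, 1 ≤ k → k ≤ n - 3 →
          Matrix.trace ((List.ofFn (fun j : Fin (k + 1) => b (j + 1))).prod *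
              ((List.ofFn (fun j : Fin (k + 1) => b (j + 1))).prod)ᴴ)
            = ((2 * Real.cosh (ℓ k) : ℝ) : ℂ))) ↔
    ((|r 1 - r 2| ≤ ℓ 1 ∧ ℓ 1 ≤ r 1 + r 2) ∧
     (∀ k, 2 ≤ k → k ≤ n - 3 →
        |ℓ (k - 1) - r (k + 1)| ≤ ℓ k ∧ ℓ k ≤ ℓ (k - 1) + r (k + 1)) ∧
     (|r (n - 1) - r n| ≤ ℓ (n - 3) ∧ ℓ (n - 3) ≤ r (n - 1) + r n)) := by
  constructor
  · rintro ⟨b, hB, hprod, hT, hD⟩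
    change partProd b n = 1 at hprod
    change ∀ k, 1 ≤ k → k ≤ n - 3 → Matrix.trace (partProd b (k + 1) * (partProd b (k + 1))ᴴ) = _
      at hD
    have hPB := inB_partProd hB
    obtain ⟨m, rfl⟩ : ∃ m, n = m + 4 := ⟨n - 4, by omega⟩
    have e1 : m + 4 - 1 = m + 3 := by omega
    have e3 : m + 4 - 3 = m + 1 := by omega
    rw [e3] at hl hD
    rw [e1, e3]
    refine ⟨?_, ?_, ?_⟩
    · have h2 := hD 1 le_rfl (by omega)
      have hp1 : partProd b 1 = b 1 := by rw [partProd_succ, partProd_zero, one_mul]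
      rw [partProd_succ, hp1] at h2
      exact (hB 1 (by omega) (by omega)).triangle (hB 2 (by omega) (by omega))
        (hr 1 (by omega) (by omega)) (hr 2 (by omega) (by omega)) (hl 1 (by omega) (by omega))
        (hT 1 (by omega) (by omega)) (hT 2 (by omega) (by omega)) h2
    · intro k hk hk'
      obtain ⟨j, rfl⟩ : ∃ j, k = j + 2 := ⟨k - 2, by omega⟩
      have h2 := hD (j + 2) (by omega) hk'
      rw [partProd_succ] at h2
      exact (hPB (j + 2) (by omega)).triangle (hB (j + 3) (by omega) (by omega))
        (hl (j + 1) (by omega) (by omega)) (hr _ (by omega) (by omega)) (hl _ (by omega) hk')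
        (hD (j + 1) (by omega) (by omega)) (hT _ (by omega) (by omega)) h2
    · rw [partProd_succ] at hprod
      have h2 := (hPB (m + 3) (by omega)).trace_eq_of_mul_eq_one hprod
      rw [hT (m + 4) (by omega) (by omega), partProd_succ] at h2
      obtain ⟨h3, h4⟩ := (hPB (m + 2) (by omega)).triangle (hB (m + 3) (by omega) (by omega))
        (hl (m + 1) (by omega) (by omega)) (hr _ (by omega) (by omega))
        (hr (m + 4) (by omega) (by omega))
        (hD (m + 1) (by omega) (by omega)) (hT _ (by omega) (by omega)) h2
      rw [abs_le] at h3
      exact ⟨abs_le.2 ⟨by linarith, by linarith⟩, by linarith⟩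
  · rintro ⟨⟨h1, h12⟩, h2, h3, h34⟩
    -- the distances of the vertices from the first one
    set M : ℕ → ℝ := fun k => if k = 0 then 0 else if k = 1 then r 1 else
      if k = n - 1 then r n else if k = n then 0 else ℓ (k - 1) with hMdef
    have M0 : M 0 = 0 := by simp [hMdef]
    have M1 : M 1 = r 1 := by simp [hMdef]
    have Mn1 : M (n - 1) = r n := by
      simp only [hMdef]
      rw [if_neg (by omega), if_neg (by omega), if_pos trivial]
    have Mn : M n = 0 := by
      simp only [hMdef]
      rw [if_neg (by omega), if_neg (by omega), if_neg (by omega), if_pos trivial]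
    have Mk : ∀ k, 1 ≤ k → k ≤ n - 3 → M (k + 1) = ℓ k := by
      intro k hk hk'
      simp only [hMdef]
      rw [if_neg (by omega), if_neg (by omega), if_neg (by omega), if_neg (by omega),
        Nat.add_sub_cancel]
    have hcases : ∀ k ≤ n, k = 0 ∨ k = 1 ∨ k = n - 1 ∨ k = n ∨
        ∃ j, 1 ≤ j ∧ j ≤ n - 3 ∧ k = j + 1 := by
      intro k hk
      by_cases hk2 : 2 ≤ k ∧ k ≤ n - 2
      · exact Or.inr (Or.inr (Or.inr (Or.inr ⟨k - 1, by omega, by omega, by omega⟩)))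
      · omega
    obtain ⟨b, hB, hT, hP, -⟩ := exists_path (r := r) (M := M) M0 n hr (by
      intro k hk
      rcases hcases k hk with rfl | rfl | rfl | rfl | ⟨j, hj, hj', rfl⟩
      · exact M0.ge
      · rw [M1]; exact hr 1 le_rfl hk
      · rw [Mn1]; exact hr n (by omega) le_rfl
      · exact Mn.ge
      · rw [Mk j hj hj']; exact hl j hj hj') (by
      intro k hk
      rcases hcases k hk.le with rfl | rfl | rfl | rfl | ⟨j, hj, hj', rfl⟩
      · have := hr 1 le_rfl (by omega)
        rw [M0, zero_add, M1, zero_sub, abs_neg, abs_of_nonneg this]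
        simp
      · rw [M1, Mk 1 le_rfl (by omega)]
        exact ⟨h1, h12⟩
      · have := hr n (by omega) le_rfl
        rw [Mn1, Nat.sub_add_cancel (by omega), Mn, sub_self, abs_zero]
        exact ⟨le_rfl, by linarith⟩
      · omega
      · rw [Mk j hj hj']
        rcases hj'.lt_or_eq with hlt | heq
        · rw [Mk (j + 1) (by omega) (by omega)]
          exact h2 (j + 1) (by omega) (by omega)
        · have e : j + 1 + 1 = n - 1 := by omega
          rw [e, Mn1, heq]
          rw [abs_le] at h3
          exact ⟨abs_le.2 ⟨by linarith, by linarith⟩, by linarith⟩)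
    refine ⟨b, hB, ?_, hT, ?_⟩
    · have h4 := hP n le_rfl
      rw [Mn] at h4
      exact (inB_partProd hB n le_rfl).eq_one h4
    · intro k hk hk'
      have h4 := hP (k + 1) (by omega)
      rw [Mk k hk hk'] at h4
      exact h4
end

section
/- Let λ > 0 and ε ∈ (0,1], and set τ(ε) := 1/(1 − e^{4ελ}) (note τ(ε) < 0). Then the function (α,β) ↦ (−2/ε)·1/((1 + α² + β²) − τ(ε)·(1 + α² + β²)²) is Lebesgue integrable on ℝ² and ∫_{ℝ²} (−2/ε)/((1 + α² + β²) − τ(ε)(1 + α² + β²)²) dα dβ = −8πλ. (This computes ∫ ω_ε = −8πλ for the family of symplectic forms ω_ε on S², showing the cohomology classes [ω_ε] ∈ H²(S²) are constant in ε.) -/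
/-!
In polar coordinates the integrand depends only on `r`, so the integral is `2π · (-2/ε)` times
the radial integral `∫₀^∞ r / (s + t s²) dr`, where `s = 1 + r²` and
`t = -τ(ε) = 1 / (e^{4ελ} - 1) > 0`. The radial integrand has the primitive
`-½ log (t + 1/s)`, so the radial integral equals `½ log ((t + 1)/t) = ½ log e^{4ελ} = 2ελ`
(`radial_integral`). The total is `-8πλ`. Since this value is nonzero while the Bochner integral
of a non-integrable function is zero, integrability follows.
-/

open MeasureTheory

/-- The radial integral, evaluated with the primitive `-½ log (t + 1/(1 + r²))`. -/
lemma radial_integral (t : ℝ) (ht : 0 < t) :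
    ∫ r in Set.Ioi (0 : ℝ), r / ((1 + r ^ 2) + t * (1 + r ^ 2) ^ 2)
      = (Real.log (t + 1) - Real.log t) / 2 := by
  have hderiv : ∀ r ∈ Set.Ici (0 : ℝ),
      HasDerivAt (fun r : ℝ => -Real.log (t + (1 + r ^ 2)⁻¹) / 2)
        (r / ((1 + r ^ 2) + t * (1 + r ^ 2) ^ 2)) r := by
    intro r _
    have hs : 0 < 1 + r ^ 2 := by positivity
    have h1 : HasDerivAt (fun r : ℝ => 1 + r ^ 2) (2 * r) r := by
      simpa using (hasDerivAt_pow 2 r).const_add 1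
    have h2 : 0 < t + (1 + r ^ 2)⁻¹ := by positivity
    refine ((((h1.fun_inv hs.ne').const_add t).log h2.ne').fun_neg.div_const 2).congr_deriv ?_
    field_simp
    ring
  have hlim : Filter.Tendsto (fun r : ℝ => -Real.log (t + (1 + r ^ 2)⁻¹) / 2) Filter.atTop
      (nhds (-Real.log t / 2)) := by
    have h1 : Filter.Tendsto (fun r : ℝ => (1 + r ^ 2)⁻¹) Filter.atTop (nhds 0) :=
      (Filter.tendsto_atTop_add_const_left _ 1
        (Filter.tendsto_pow_atTop two_ne_zero)).inv_tendsto_atTop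
    have h2 : Filter.Tendsto (fun r : ℝ => t + (1 + r ^ 2)⁻¹) Filter.atTop (nhds t) := by
      simpa using h1.const_add t
    exact (h2.log ht.ne').neg.div_const 2
  rw [integral_Ioi_of_hasDerivAt_of_nonneg' hderiv ?_ hlim]
  · norm_num
    ring
  · intro r hr
    have : 0 < r := hr
    positivity

/-- `∫_{ℝ²} ω_ε = −8πλ` for Lu's family of symplectic forms on `S²` in stereographic
coordinates, where `τ(ε) = 1/(1−e^{4ελ}) < 0`: the classes `[ω_ε] ∈ H²(S²)` are constant. -/
theorem stmt12 (lam ε : ℝ) (hlam : 0 < lam) (hε : ε ∈ Set.Ioc (0 : ℝ) 1) :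
    1 / (1 - Real.exp (4 * ε * lam)) < 0 ∧
    Integrable (fun p : ℝ × ℝ =>
      (-2 / ε) / ((1 + p.1 ^ 2 + p.2 ^ 2)
        - (1 / (1 - Real.exp (4 * ε * lam))) * (1 + p.1 ^ 2 + p.2 ^ 2) ^ 2)) ∧
    ∫ p : ℝ × ℝ,
        (-2 / ε) / ((1 + p.1 ^ 2 + p.2 ^ 2)
          - (1 / (1 - Real.exp (4 * ε * lam))) * (1 + p.1 ^ 2 + p.2 ^ 2) ^ 2)
      = -8 * Real.pi * lam := by
  have hε0 : 0 < ε := hε.1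
  have hE : 1 < Real.exp (4 * ε * lam) := Real.one_lt_exp_iff.2 (by positivity)
  have hτ : 1 / (1 - Real.exp (4 * ε * lam)) < 0 := one_div_neg.2 (by linarith)
  have hlog : Real.log (-(1 / (1 - Real.exp (4 * ε * lam))) + 1)
      - Real.log (-(1 / (1 - Real.exp (4 * ε * lam)))) = 4 * ε * lam := by
    rw [← Real.log_div (by linarith) (by linarith)]
    have h : (-(1 / (1 - Real.exp (4 * ε * lam))) + 1) / -(1 / (1 - Real.exp (4 * ε * lam)))
        = Real.exp (4 * ε * lam) := by
      have : 1 - Real.exp (4 * ε * lam) ≠ 0 := by linarith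
      field_simp
      ring
    rw [h, Real.log_exp]
  generalize 1 / (1 - Real.exp (4 * ε * lam)) = τ at *
  have hint : ∫ p : ℝ × ℝ, (-2 / ε) / ((1 + p.1 ^ 2 + p.2 ^ 2) - τ * (1 + p.1 ^ 2 + p.2 ^ 2) ^ 2)
      = -8 * Real.pi * lam := by
    rw [← integral_comp_polarCoord_symm, polarCoord_target]
    have hpolar : ∀ p : ℝ × ℝ,
        p.1 • ((-2 / ε) / ((1 + (polarCoord.symm p).1 ^ 2 + (polarCoord.symm p).2 ^ 2)
          - τ * (1 + (polarCoord.symm p).1 ^ 2 + (polarCoord.symm p).2 ^ 2) ^ 2))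
        = (p.1 / ((1 + p.1 ^ 2) + -τ * (1 + p.1 ^ 2) ^ 2)) * (-2 / ε) := by
      intro p
      have hs : 1 + (polarCoord.symm p).1 ^ 2 + (polarCoord.symm p).2 ^ 2 = 1 + p.1 ^ 2 := by
        simp only [polarCoord_symm_apply]
        linear_combination p.1 ^ 2 * Real.sin_sq_add_cos_sq p.2
      rw [hs, smul_eq_mul]
      ring
    simp_rw [hpolar]
    rw [Measure.volume_eq_prod,
      setIntegral_prod_mul (fun r : ℝ => r / ((1 + r ^ 2) + -τ * (1 + r ^ 2) ^ 2))
        (fun _ : ℝ => -2 / ε),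
      radial_integral (-τ) (by linarith), hlog, setIntegral_const]
    simp only [Real.volume_real_Ioo_of_le (by linarith [Real.pi_pos] : -Real.pi ≤ Real.pi),
      smul_eq_mul]
    field_simp
    ring
  refine ⟨hτ, Integrable.of_integral_ne_zero ?_, hint⟩
  rw [hint]
  have := Real.pi_pos
  have : 0 < Real.pi * lam := by positivity
  nlinarith
end

section
/- Relative Ehresmann triviality used for the family of moduli spaces: let F : ℝ^n × [0,1] → ℝ^m be a map that extends to a C^∞ map on an open neighborhood of ℝ^n × [0,1] in ℝ^{n+1}, let M = F⁻¹(0), and suppose M is compact and that for every (x,t) ∈ M the partial differential ∂F/∂x|_{(x,t)} : ℝ^n → ℝ^m is surjective. Then the projection p : M → [0,1], p(x,t) = t, is a trivial fiber bundle: there is a homeomorphism h : M → (M ∩ (ℝ^n × {0})) × [0,1] whose second component is p. -/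
/-!
The proof is Ehresmann's: the product structure on `M` is the flow of a time-dependent vector field
that lifts `∂/∂t`.

Write `E = ℝⁿ`. A function `v : E × ℝ → E` lifts `∂/∂t` near `M` when `dF_y (v y, 1) = 0` for `y` near
`M`. Near a point `p ∈ M`, choose a linear right inverse `B` of `A(p) = ∂F/∂x (p)`; then `A(y) B` is
invertible for `y` near `p`, and `w y = -B (A(y) B)⁻¹ ∂F/∂t (y)` is a local `C¹` lift
(`exists_local_lift`). The lifts at a point form a convex set, so a partition of unity gives a `C¹`
field with compact support on `E × ℝ` that is a lift near the compact set `M` (`exists_global_lift`).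
Being bounded and globally Lipschitz, this field has integral curves through every point of
`E × [0,1]`, defined for all times in `[0,1]`, unique, and jointly continuous in time and initial value
(`exists_flow`, `flow_unique`). Along such a curve `γ` the function `F (γ t, t)` is locally constant as
long as `(γ t, t)` is near `M`, so a curve that meets `M` stays in `M` during `[0,1]`
(`flow_preserves`). Hence `(q, t) ↦ (γ_q t, t)` is a continuous bijection from the compact space
`(M ∩ {t = 0}) × [0,1]` to `M`: surjective by following curves back to time `0`, injective by
uniqueness. Its inverse is the required homeomorphism.
-/

open Set Filter Topology NNReal

section

variable {E G : Type*} [NormedAddCommGroup E] [NormedSpace ℝ E] [FiniteDimensional ℝ E]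
  [NormedAddCommGroup G] [NormedSpace ℝ G] [FiniteDimensional ℝ G]

omit [FiniteDimensional ℝ E] in
theorem exists_local_lift {F : E × ℝ → G} {p : E × ℝ} (hF : ContDiffAt ℝ 2 F p)
    (hs : Function.Surjective ((fderiv ℝ F p).comp (ContinuousLinearMap.inl ℝ E ℝ))) :
    ∃ w : E × ℝ → E, ContDiffAt ℝ 1 w p ∧
      ∀ᶠ y in 𝓝 p, DifferentiableAt ℝ F y ∧ fderiv ℝ F y (w y, 1) = 0 := by
  obtain ⟨B₀, hB₀⟩ := LinearMap.exists_rightInverse_of_surjective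
    ((fderiv ℝ F p).comp (ContinuousLinearMap.inl ℝ E ℝ) : E →ₗ[ℝ] G)
    (LinearMap.range_eq_top.2 hs)
  let B : G →L[ℝ] E := LinearMap.toContinuousLinearMap B₀
  let C : E × ℝ → (G →L[ℝ] G) := fun y =>
    ((fderiv ℝ F y).comp (ContinuousLinearMap.inl ℝ E ℝ)).comp B
  have hfd : ContDiffAt ℝ 1 (fderiv ℝ F) p := hF.fderiv_right (by norm_num)
  have hC : ContDiffAt ℝ 1 C p :=
    (hfd.clm_comp contDiffAt_const).clm_comp contDiffAt_const
  have hCp : C p = 1 := by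
    ext z
    exact LinearMap.congr_fun hB₀ z
  have hinv : ContDiffAt ℝ 1 (fun y => Ring.inverse (C y)) p := by
    have h1 : ContDiffAt ℝ 1 Ring.inverse (C p) := by
      rw [hCp]
      exact contDiffAt_ringInverse ℝ (1 : (G →L[ℝ] G)ˣ)
    exact h1.comp p hC
  refine ⟨fun y => -B (Ring.inverse (C y) (fderiv ℝ F y (0, 1))), ?_, ?_⟩
  · exact (B.contDiff.contDiffAt.comp p
      (hinv.clm_apply (hfd.clm_apply contDiffAt_const))).neg
  · have hu : ∀ᶠ y in 𝓝 p, IsUnit (C y) :=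
      hC.continuousAt.eventually (Units.isOpen.mem_nhds (by
        change IsUnit (C p)
        rw [hCp]
        exact isUnit_one))
    filter_upwards [hu, hF.eventually (by decide)] with y hy hFy
    refine ⟨hFy.differentiableAt (by norm_num), ?_⟩
    have h2 : C y (Ring.inverse (C y) (fderiv ℝ F y (0, 1))) = fderiv ℝ F y (0, 1) := by
      rw [← mul_apply_eq_comp, Ring.mul_inverse_cancel _ hy]
      rfl
    set z := Ring.inverse (C y) (fderiv ℝ F y (0, 1))
    have h3 : ((-B z, 1) : E × ℝ) = -(B z, 0) + (0, 1) := by simp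
    have h4 : fderiv ℝ F y (B z, 0) = C y z := by simp [C]
    rw [h3, map_add, map_neg, h4, h2, neg_add_cancel]

omit [FiniteDimensional ℝ G] in
/-- The local lifts are glued by a partition of unity subject to two convex constraints: lifting
`∂/∂t` on a compact neighborhood `K₁` of `M`, and vanishing off a larger compact set `K₂`. -/
theorem exists_global_lift {F : E × ℝ → G} {M : Set (E × ℝ)} (hM : IsCompact M)
    (hloc : ∀ p ∈ M, ∃ w : E × ℝ → E, ContDiffAt ℝ 1 w p ∧
      ∀ᶠ y in 𝓝 p, DifferentiableAt ℝ F y ∧ fderiv ℝ F y (w y, 1) = 0) :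
    ∃ v : E × ℝ → E, ContDiff ℝ 1 v ∧ HasCompactSupport v ∧
      ∀ p ∈ M, ∀ᶠ y in 𝓝 p, DifferentiableAt ℝ F y ∧ fderiv ℝ F y (v y, 1) = 0 := by
  let S : Set (E × ℝ) := {p | ∃ w : E × ℝ → E, ContDiffAt ℝ 1 w p ∧
      ∀ᶠ y in 𝓝 p, DifferentiableAt ℝ F y ∧ fderiv ℝ F y (w y, 1) = 0}
  have hS : IsOpen S := by
    rw [isOpen_iff_mem_nhds]
    rintro p ⟨w, hw, hy⟩
    filter_upwards [hw.eventually (by decide), hy.eventually_nhds] with q h1 h2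
    exact ⟨w, h1, h2⟩
  obtain ⟨K₁, hK₁, hMK₁, hK₁S⟩ := exists_compact_between hM hS hloc
  obtain ⟨K₂, hK₂, hK₁K₂, -⟩ := exists_compact_between hK₁ isOpen_univ (subset_univ _)
  let t : E × ℝ → Set E := fun y =>
    {e | (y ∈ K₁ → fderiv ℝ F y (e, 1) = 0) ∧ (y ∉ K₂ → e = 0)}
  have ht : ∀ y, Convex ℝ (t y) := by
    intro y a ha b hb r s hr hs hrs
    refine ⟨fun hy => ?_, fun hy => ?_⟩
    · have h1 : ((r • a + s • b, 1) : E × ℝ) = r • (a, 1) + s • (b, 1) := by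
        ext <;> simp [hrs]
      rw [h1, map_add, map_smul, map_smul, ha.1 hy, hb.1 hy]
      simp
    · rw [ha.2 hy, hb.2 hy]
      simp
  have hglob : ∀ x : E × ℝ, ∃ U ∈ 𝓝 x, ∃ g : E × ℝ → E,
      ContMDiffOn (modelWithCornersSelf ℝ (E × ℝ)) (modelWithCornersSelf ℝ E) 1 g U ∧
        ∀ y ∈ U, g y ∈ t y := by
    intro x
    by_cases hx : x ∈ K₁
    · obtain ⟨w, hw, hwy⟩ := hK₁S hx
      have hx2 : K₂ ∈ 𝓝 x := mem_interior_iff_mem_nhds.1 (hK₁K₂ hx)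
      have hev : ∀ᶠ y in 𝓝 x, ContDiffAt ℝ 1 w y ∧ y ∈ K₂ ∧ fderiv ℝ F y (w y, 1) = 0 := by
        filter_upwards [hw.eventually (by decide), hx2, hwy] with y h1 h2 h3
        exact ⟨h1, h2, h3.2⟩
      refine ⟨_, hev, w, ?_, ?_⟩
      · rw [contMDiffOn_iff_contDiffOn]
        exact fun y hy => hy.1.contDiffWithinAt
      · exact fun y hy => ⟨fun _ => hy.2.2, fun h => absurd hy.2.1 h⟩
    · exact ⟨K₁ᶜ, hK₁.isClosed.isOpen_compl.mem_nhds hx, fun _ => 0, contMDiffOn_const,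
        fun y hy => ⟨fun h => absurd h hy, fun _ => rfl⟩⟩
  obtain ⟨v, hv⟩ := exists_contMDiffMap_forall_mem_convex_of_local
    (modelWithCornersSelf ℝ (E × ℝ)) (n := 1) ht hglob
  refine ⟨v, v.contMDiff.contDiff, HasCompactSupport.intro hK₂ fun y hy => (hv y).2 hy, ?_⟩
  intro p hp
  have hp1 : ∀ᶠ y in 𝓝 p, y ∈ K₁ := mem_interior_iff_mem_nhds.1 (hMK₁ hp)
  filter_upwards [hp1] with y hy
  obtain ⟨w, -, hw⟩ := hK₁S hy
  exact ⟨hw.self_of_nhds.1, (hv y).1 hy⟩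

/-- The field is bounded, so a large enough ball confines all curves that start in the ball of radius
`R`, and Picard–Lindelöf applies on the whole time interval. The interval `[-1, 2]` is used so that
`[0, 1]` lies in its interior and derivatives there are two-sided. -/
theorem exists_flow {v : E × ℝ → E} (hv : ContDiff ℝ 1 v) (hc : HasCompactSupport v)
    {t₀ : ℝ} (ht₀ : t₀ ∈ Icc (-1 : ℝ) 2) (R : ℝ≥0) :
    ∃ α : E × ℝ → E, (∀ x ∈ Metric.closedBall (0 : E) R, α (x, t₀) = x ∧
      ∀ t ∈ Ioo (-1 : ℝ) 2, HasDerivAt (fun s => α (x, s)) (v (α (x, t), t)) t) ∧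
      ContinuousOn α (Metric.closedBall (0 : E) R ×ˢ Icc (-1 : ℝ) 2) := by
  obtain ⟨K, hK⟩ := hv.lipschitzWith_of_hasCompactSupport hc (by norm_num)
  obtain ⟨L, hL⟩ := hc.exists_bound_of_continuous hv.continuous
  have hpl : IsPicardLindelof (fun t x => v (x, t)) (⟨t₀, ht₀⟩ : Icc (-1 : ℝ) 2) (0 : E)
      (R + L.toNNReal * 3) R L.toNNReal K := by
    refine ⟨fun t _ => ?_, fun x _ => ?_, fun t _ x _ => ?_, ?_⟩
    · refine (LipschitzWith.of_dist_le_mul fun x y => ?_).lipschitzOnWith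
      refine (hK.dist_le_mul _ _).trans_eq ?_
      simp [Prod.dist_eq]
    · exact (hv.continuous.comp (by fun_prop)).continuousOn
    · exact (hL _).trans (Real.le_coe_toNNReal L)
    · push_cast
      rw [add_sub_cancel_left]
      gcongr
      exact max_le (by linarith [ht₀.1]) (by linarith [ht₀.2])
  obtain ⟨α, h1, h2⟩ := hpl.exists_forall_mem_closedBall_eq_hasDerivWithinAt_continuousOn
  exact ⟨α, fun x hx => ⟨(h1 x hx).1, fun t ht =>
    ((h1 x hx).2 t (Ioo_subset_Icc_self ht)).hasDerivAt (Icc_mem_nhds ht.1 ht.2)⟩, h2⟩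

omit [FiniteDimensional ℝ E] in
theorem flow_unique {v : E × ℝ → E} (hv : ContDiff ℝ 1 v) (hc : HasCompactSupport v)
    {γ δ : ℝ → E} (hγ : ∀ t ∈ Ioo (-1 : ℝ) 2, HasDerivAt γ (v (γ t, t)) t)
    (hδ : ∀ t ∈ Ioo (-1 : ℝ) 2, HasDerivAt δ (v (δ t, t)) t)
    {t₀ : ℝ} (ht₀ : t₀ ∈ Ioo (-1 : ℝ) 2) (h : γ t₀ = δ t₀) :
    EqOn γ δ (Ioo (-1 : ℝ) 2) := by
  obtain ⟨K, hK⟩ := hv.lipschitzWith_of_hasCompactSupport hc (by norm_num)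
  refine ODE_solution_unique_of_mem_Ioo (v := fun t x => v (x, t)) (s := fun _ => univ) (K := K)
    (fun t _ => ?_) ht₀ (fun t ht => ⟨hγ t ht, trivial⟩) (fun t ht => ⟨hδ t ht, trivial⟩) h
  refine (LipschitzWith.of_dist_le_mul fun x y => ?_).lipschitzOnWith
  refine (hK.dist_le_mul _ _).trans_eq ?_
  simp [Prod.dist_eq]

omit [FiniteDimensional ℝ E] [FiniteDimensional ℝ G] in
/-- The set of times at which the curve lies in `M` is clopen in `[0,1]`: closed because `M` is, and
open because `F` is constant along the curve near each such time. -/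
theorem flow_preserves {F : E × ℝ → G} {M : Set (E × ℝ)}
    (hM : M = {p | p ∈ univ ×ˢ Icc (0 : ℝ) 1 ∧ F p = 0}) (hcl : IsClosed M) {v : E × ℝ → E}
    (hv : ∀ p ∈ M, ∀ᶠ y in 𝓝 p, DifferentiableAt ℝ F y ∧ fderiv ℝ F y (v y, 1) = 0)
    {γ : ℝ → E} (hγ : ∀ t ∈ Ioo (-1 : ℝ) 2, HasDerivAt γ (v (γ t, t)) t)
    {t₀ : ℝ} (ht₀ : (γ t₀, t₀) ∈ M) {t : ℝ} (ht : t ∈ Icc (0 : ℝ) 1) : (γ t, t) ∈ M := by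
  have hsub : Icc (0 : ℝ) 1 ⊆ Ioo (-1 : ℝ) 2 := fun s hs =>
    ⟨by linarith [hs.1], by linarith [hs.2]⟩
  have hcont : ∀ s ∈ Icc (0 : ℝ) 1, ContinuousAt (fun s => (γ s, s)) s := fun s hs =>
    (hγ s (hsub hs)).continuousAt.prodMk continuousAt_id
  have hMt : ∀ {s : ℝ}, (γ s, s) ∈ M → s ∈ Icc (0 : ℝ) 1 := by
    intro s hs
    rw [hM] at hs
    exact hs.1.2
  have hMF : ∀ {s : ℝ}, (γ s, s) ∈ M → F (γ s, s) = 0 := by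
    intro s hs
    rw [hM] at hs
    exact hs.2
  let T : Set (Icc (0 : ℝ) 1) := {s | (γ s, (s : ℝ)) ∈ M}
  have hTc : IsClosed T := by
    refine hcl.preimage (continuous_iff_continuousAt.2 fun s => ?_)
    exact (hcont s s.2).comp continuous_subtype_val.continuousAt
  have hTo : IsOpen T := by
    rw [isOpen_iff_mem_nhds]
    intro s hs
    have hev : ∀ᶠ r in 𝓝 (s : ℝ), (DifferentiableAt ℝ F (γ r, r) ∧
        fderiv ℝ F (γ r, r) (v (γ r, r), 1) = 0) ∧ r ∈ Ioo (-1 : ℝ) 2 :=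
      ((hcont s s.2).eventually (hv _ hs)).and (isOpen_Ioo.mem_nhds (hsub s.2))
    obtain ⟨ε, hε, hball⟩ := Metric.eventually_nhds_iff_ball.1 hev
    have hder : ∀ r ∈ Metric.ball (s : ℝ) ε, HasDerivAt (fun r => F (γ r, r)) 0 r := by
      intro r hr
      obtain ⟨⟨h1, h2⟩, h3⟩ := hball r hr
      have := HasFDerivAt.comp_hasDerivAt (f := fun r => (γ r, r)) r h1.hasFDerivAt
        ((hγ r h3).prodMk (hasDerivAt_id r))
      rwa [h2] at this
    have hconst : ∀ r ∈ Metric.ball (s : ℝ) ε, F (γ r, r) = 0 := by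
      intro r hr
      rw [← hMF hs]
      exact Metric.isOpen_ball.is_const_of_deriv_eq_zero (convex_ball _ _).isPreconnected
        (fun r hr => (hder r hr).differentiableAt.differentiableWithinAt)
        (fun r hr => (hder r hr).deriv) hr (Metric.mem_ball_self hε)
    filter_upwards [Metric.ball_mem_nhds s hε] with r hr
    change (γ r, (r : ℝ)) ∈ M
    rw [hM]
    exact ⟨⟨trivial, r.2⟩, hconst r hr⟩
  have hne : T.Nonempty := ⟨⟨t₀, hMt ht₀⟩, ht₀⟩
  have huniv := IsClopen.eq_univ ⟨hTc, hTo⟩ hne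
  exact huniv.ge (mem_univ (⟨t, ht⟩ : Icc (0 : ℝ) 1))

end

/-- Relative Ehresmann triviality: if `F : ℝⁿ × [0,1] → ℝᵐ` extends to a `C^∞` map on an
open neighborhood of `ℝⁿ × [0,1]`, `M = F⁻¹(0)` is compact, and `∂F/∂x` is surjective at
every point of `M`, then the projection `p : M → [0,1]` is a trivial fiber bundle: there is
a homeomorphism `M ≃ (M ∩ (ℝⁿ × {0})) × [0,1]` whose second component is `p`. -/
theorem stmt18 (n m : ℕ) (F : (Fin n → ℝ) × ℝ → (Fin m → ℝ))
    (hext : ∃ U : Set ((Fin n → ℝ) × ℝ), IsOpen U ∧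
      (Set.univ ×ˢ Set.Icc (0 : ℝ) 1) ⊆ U ∧ ContDiffOn ℝ (⊤ : ℕ∞) F U)
    (M : Set ((Fin n → ℝ) × ℝ))
    (hM : M = {p | p ∈ Set.univ ×ˢ Set.Icc (0 : ℝ) 1 ∧ F p = 0})
    (hcpt : IsCompact M)
    (hreg : ∀ p ∈ M, Function.Surjective (fderiv ℝ (fun x => F (x, p.2)) p.1)) :
    ∃ h : M ≃ₜ ({q ∈ M | q.2 = 0} × Set.Icc (0 : ℝ) 1),
      ∀ x : M, ((h x).2 : ℝ) = (x : (Fin n → ℝ) × ℝ).2 := by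
  obtain ⟨U, hU, hsubU, hFU⟩ := hext
  have hMt : ∀ p ∈ M, p.2 ∈ Icc (0 : ℝ) 1 := by
    intro p hp
    rw [hM] at hp
    exact hp.1.2
  have hsub : Icc (0 : ℝ) 1 ⊆ Ioo (-1 : ℝ) 2 := fun s hs =>
    ⟨by linarith [hs.1], by linarith [hs.2]⟩
  have h0 : (0 : ℝ) ∈ Icc (0 : ℝ) 1 := by simp
  have hloc : ∀ p ∈ M, ∃ w : (Fin n → ℝ) × ℝ → (Fin n → ℝ), ContDiffAt ℝ 1 w p ∧
      ∀ᶠ y in 𝓝 p, DifferentiableAt ℝ F y ∧ fderiv ℝ F y (w y, 1) = 0 := by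
    intro p hp
    have hF : ContDiffAt ℝ 2 F p :=
      (contDiffOn_infty.1 hFU 2).contDiffAt (hU.mem_nhds (hsubU ⟨trivial, hMt p hp⟩))
    refine exists_local_lift hF ?_
    have hd : HasFDerivAt F (fderiv ℝ F p) (p.1, p.2) :=
      (hF.differentiableAt (by norm_num)).hasFDerivAt
    have := (HasFDerivAt.comp (f := fun x => (x, p.2)) p.1 hd
      (hasFDerivAt_prodMk_left p.1 p.2)).fderiv
    rw [← this]
    exact hreg p hp
  obtain ⟨v, hv, hc, hlift⟩ := exists_global_lift hcpt hloc
  obtain ⟨R', hR'⟩ := hcpt.isBounded.subset_closedBall 0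
  have hMR : ∀ p ∈ M, p.1 ∈ Metric.closedBall (0 : Fin n → ℝ) R'.toNNReal := by
    intro p hp
    have h1 := hR' hp
    rw [mem_closedBall_zero_iff] at h1 ⊢
    exact (norm_fst_le p).trans (h1.trans (Real.le_coe_toNNReal R'))
  obtain ⟨α, hα, hαc⟩ := exists_flow hv hc (Ioo_subset_Icc_self (hsub h0)) R'.toNNReal
  have hαM : ∀ q ∈ M, q.2 = 0 → ∀ t ∈ Icc (0 : ℝ) 1, (α (q.1, t), t) ∈ M := by
    intro q hq hq0 t ht
    obtain ⟨h1, h2⟩ := hα q.1 (hMR q hq)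
    refine flow_preserves hM hcpt.isClosed hlift h2 (t₀ := 0) ?_ ht
    rw [h1, ← hq0]
    exact hq
  let Φ : ({q ∈ M | q.2 = 0} × Icc (0 : ℝ) 1) → M := fun z =>
    ⟨(α (z.1.1.1, z.2), z.2), hαM _ z.1.2.1 z.1.2.2 _ z.2.2⟩
  have hΦc : Continuous Φ := by
    refine Continuous.subtype_mk (Continuous.prodMk ?_ (by fun_prop)) _
    exact hαc.comp_continuous (f := fun z : ({q ∈ M | q.2 = 0} × Icc (0 : ℝ) 1) =>
      ((z.1.1.1, (z.2 : ℝ)) : (Fin n → ℝ) × ℝ)) (by fun_prop)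
      fun z => ⟨hMR z.1.1 z.1.2.1, Ioo_subset_Icc_self (hsub z.2.2)⟩
  have hΦi : Function.Injective Φ := by
    rintro ⟨⟨⟨x, a⟩, hx, rfl : a = 0⟩, t, ht⟩ ⟨⟨⟨y, b⟩, hy, rfl : b = 0⟩, s, hs⟩ hxy
    have h1 : α (x, t) = α (y, s) := congrArg (fun z : M => z.1.1) hxy
    have h2 : t = s := congrArg (fun z : M => z.1.2) hxy
    subst h2
    have h3 := flow_unique hv hc (hα x (hMR _ hx)).2 (hα y (hMR _ hy)).2 (hsub ht) h1 (hsub h0)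
    have h4 : x = y := by
      simpa only [(hα x (hMR _ hx)).1, (hα y (hMR _ hy)).1] using h3
    subst h4
    rfl
  have hΦs : Function.Surjective Φ := by
    rintro ⟨⟨x, t⟩, hx⟩
    have ht := hMt _ hx
    obtain ⟨β, hβ, -⟩ := exists_flow hv hc (Ioo_subset_Icc_self (hsub ht)) R'.toNNReal
    obtain ⟨h1, h2⟩ := hβ x (hMR _ hx)
    have hq : (β (x, 0), (0 : ℝ)) ∈ M := by
      refine flow_preserves hM hcpt.isClosed hlift h2 (t₀ := t) ?_ h0
      rw [h1]
      exact hx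
    obtain ⟨h3, h4⟩ := hα _ (hMR _ hq)
    have h5 := flow_unique hv hc h4 h2 (hsub h0) h3 (hsub ht)
    refine ⟨(⟨(β (x, 0), 0), hq, rfl⟩, ⟨t, ht⟩), Subtype.ext (Prod.ext ?_ rfl)⟩
    exact h5.trans h1
  have hM0 : IsCompact {q ∈ M | q.2 = 0} :=
    hcpt.inter_right (isClosed_eq continuous_snd continuous_const)
  have : CompactSpace {q ∈ M | q.2 = 0} := isCompact_iff_compactSpace.1 hM0
  let e : ({q ∈ M | q.2 = 0} × Icc (0 : ℝ) 1) ≃ₜ M :=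
    Continuous.homeoOfEquivCompactToT2 (f := Equiv.ofBijective Φ ⟨hΦi, hΦs⟩) hΦc
  refine ⟨e.symm, fun x => ?_⟩
  -- The time coordinate of `Φ z` is that of `z`.
  exact congrArg (fun z : M => z.1.2) (e.apply_symm_apply x)
end
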